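/- For v = (v₁,v₂,v₃) ∈ ℝ³ let Φ(v) ∈ M₃(ℝ) be the matrix (1/4)·[[v₃², 0, 0], [0, v₃², 0], [−v₁v₃, −v₂v₃, 0]]. Then every symmetric matrix G ∈ M₃(ℝ) satisfying G·Φ(v) = Φ(v)ᵀ·G for all v ∈ ℝ³ is singular (not invertible). In particular there is no positive-definite symmetric G with this property. -/

import Mathlib

/-!
The last column of `Φ(v)` vanishes, so `G Φ(v) = Φ(v)ᵀ G` forces the last column of `Φ(v)ᵀ G` to
vanish: `v₃² G₁₃ = v₁ v₃ G₃₃` and `v₃² G₂₃ = v₂ v₃ G₃₃` for all `v`. The velocities `(0,0,1)` and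
`(1,0,1)` then annihilate the last column of `G`, whence `det G = 0`.
-/

open Matrix

noncomputable section

/-- The Jacobi endomorphism of the geodesic SODE of the canonical connection on SE(2),
at velocity `v = (v₁,v₂,v₃)`, in the coordinate frame. -/
def se2JacobiEndo (v : Fin 3 → ℝ) : Matrix (Fin 3) (Fin 3) ℝ :=
  (1/4 : ℝ) • !![(v 2)^2, 0, 0; 0, (v 2)^2, 0; -(v 0 * v 2), -(v 1 * v 2), 0]

theorem det_eq_zero_of_helmholtz (G : Matrix (Fin 3) (Fin 3) ℝ)
    (h : ∀ v : Fin 3 → ℝ, G * se2JacobiEndo v = (se2JacobiEndo v)ᵀ * G) : G.det = 0 := by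
  have h02 : G 0 2 = 0 := by
    have := congrFun (congrFun (h ![0, 0, 1]) 0) 2
    simpa [se2JacobiEndo, Matrix.mul_apply, Fin.sum_univ_three] using this
  have h12 : G 1 2 = 0 := by
    have := congrFun (congrFun (h ![0, 0, 1]) 1) 2
    simpa [se2JacobiEndo, Matrix.mul_apply, Fin.sum_univ_three] using this
  have h22 : G 2 2 = 0 := by
    have := congrFun (congrFun (h ![1, 0, 1]) 0) 2
    simpa [se2JacobiEndo, Matrix.mul_apply, Fin.sum_univ_three, h02] using this
  refine Matrix.det_eq_zero_of_column_eq_zero 2 fun i => ?_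
  fin_cases i
  exacts [h02, h12, h22]

/-- No (pseudo-)Riemannian metric has the canonical connection on SE(2) as its
Levi-Civita connection: every symmetric matrix `G` satisfying the Helmholtz symmetry
condition `G Φ(v) = Φ(v)ᵀ G` for all velocities `v` is singular; in particular there is
no positive-definite symmetric such `G`. -/
theorem se2_no_metric_helmholtz :
    (∀ G : Matrix (Fin 3) (Fin 3) ℝ, G.IsSymm →
      (∀ v : Fin 3 → ℝ, G * se2JacobiEndo v = (se2JacobiEndo v)ᵀ * G) →
      ¬ IsUnit G) ∧
    (∀ G : Matrix (Fin 3) (Fin 3) ℝ, G.PosDef →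
      ¬ (∀ v : Fin 3 → ℝ, G * se2JacobiEndo v = (se2JacobiEndo v)ᵀ * G)) := by
  refine ⟨fun G _ h hG => ?_, fun G hG h => ?_⟩
  · exact ((Matrix.isUnit_iff_isUnit_det G).1 hG).ne_zero (det_eq_zero_of_helmholtz G h)
  · exact hG.det_pos.ne' (det_eq_zero_of_helmholtz G h)
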